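/- Let K and H be Hopf algebras over a field k, and let F be a sheaf of (K,H)-bicomodule algebras on M that is an H-quantum principal bundle over the ringed space (M, F^{co H}). Suppose the H-comodule (H, Δ) carries a compatible left K-comodule structure making it a (K,H)-bicomodule, and that the cleaving maps j_i: H → F(U_i) relative to a cover {U_i} are (K,H)-bicomodule maps. Then for any 2-cocycle σ of K, the sheaf Σ ∘ F of (K_σ, H)-bicomodule algebras is an H-quantum principal bundle over the ringed space (M, Σ ∘ F^{co H}). -/

import Mathlib

/-!
STATEMENT 19 (Theorem 6.3 of the paper).  Let `K` and `H` be Hopf algebras over a field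
`k`, and let `F` be a sheaf of `(K,H)`-bicomodule algebras on `M` that is an `H`-quantum
principal bundle over the ringed space `(M, F^{co H})`.  Suppose the `H`-comodule `(H, Δ)`
carries a compatible left `K`-comodule structure making it a `(K,H)`-bicomodule, and that
the cleaving maps `j_i : H → F(U_i)` relative to a cover `{U_i}` are `(K,H)`-bicomodule
maps.  Then for any 2-cocycle `σ` of `K`, the sheaf `Σ ∘ F` of `(K_σ, H)`-bicomodule
algebras is an `H`-quantum principal bundle over the ringed space `(M, Σ ∘ F^{co H})`.

ENCODING.  `Σ ∘ F` has the same underlying spaces, the same `H`- and `K`-coactions, and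
the `σ`-twisted product `a ·_σ a' = σ(a₍₋₁₎ ⊗ a'₍₋₁₎) a₍₀₎a'₍₀₎`; hence "`Σ ∘ F` is an
`H`-QPB over `(M, Σ ∘ F^{co H})`" is expressed on `F` itself via the predicate
`IsQPBWith F (coinvariants) (σ-twisted product)`:  an open cover on which the coinvariants
(unchanged under `Σ`) give the structure sheaf and every extension is cleft w.r.t. the
twisted product.  The left `K`-comodule algebra structures on the values of `F` are given
as algebra maps `ρ U : F(U) → K ⊗ F(U)` (coassociative, counital, commuting with the
`H`-coaction, compatible with restrictions); the left `K`-comodule structure on `H` is a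
linear map `ρH : H → K ⊗ H` (coassociative, counital) commuting with `Δ` (bicomodule
compatibility), and the cleaving maps are `K`-comodule maps: `ρ ∘ j = (id ⊗ j) ∘ ρH`.
-/

open TensorProduct TopologicalSpace

universe u

namespace QPB

variable (k : Type u) [CommRing k]

/-- A right `H`-comodule algebra structure on the `k`-algebra `A`. -/
structure ComodAlg (H A : Type u) [Ring H] [Ring A] [Bialgebra k H] [Algebra k A] where
  δ : A →ₐ[k] A ⊗[k] H
  counit_id : (TensorProduct.rid k A).toLinearMap ∘ₗ
      (TensorProduct.map LinearMap.id (Coalgebra.counit (R := k) (A := H))) ∘ₗ δ.toLinearMap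
      = LinearMap.id
  coassoc : (TensorProduct.assoc k A H H).toLinearMap ∘ₗ
      (TensorProduct.map δ.toLinearMap LinearMap.id) ∘ₗ δ.toLinearMap
      = (TensorProduct.map LinearMap.id (Coalgebra.comul (R := k) (A := H))) ∘ₗ δ.toLinearMap

variable {k}

/-- The subalgebra of coinvariants `A^{co H} = {a : δ a = a ⊗ 1}`. -/
def ComodAlg.coinv {H A : Type u} [Ring H] [Ring A] [Bialgebra k H] [Algebra k A]
    (c : ComodAlg k H A) : Subalgebra k A where
  carrier := {a | c.δ a = a ⊗ₜ[k] 1}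
  mul_mem' := by
    intro a b ha hb
    simp only [Set.mem_setOf_eq] at *
    rw [map_mul, ha, hb, Algebra.TensorProduct.tmul_mul_tmul, mul_one]
  one_mem' := by
    simp only [Set.mem_setOf_eq, map_one, Algebra.TensorProduct.one_def]
  add_mem' := by
    intro a b ha hb
    simp only [Set.mem_setOf_eq] at *
    rw [map_add, ha, hb, TensorProduct.add_tmul]
  algebraMap_mem' := by
    intro r
    simp only [Set.mem_setOf_eq, AlgHom.commutes, Algebra.TensorProduct.algebraMap_apply]

variable (k)

/-- Convolution of two `k`-valued linear maps on a coalgebra `X`. -/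
noncomputable def convS {X : Type u} [AddCommGroup X] [Module k X] [Coalgebra k X]
    (f g : X →ₗ[k] k) : X →ₗ[k] k :=
  (LinearMap.mul' k k) ∘ₗ (TensorProduct.map f g) ∘ₗ (Coalgebra.comul (R := k) (A := X))

/-- `σ : K ⊗ K → k` is a (convolution-invertible, normalized) 2-cocycle with convolution
inverse `σ'`. -/
noncomputable def IsTwoCocycle {K : Type u} [Ring K] [Bialgebra k K]
    (σ σ' : K ⊗[k] K →ₗ[k] k) : Prop :=
  convS k
      ((LinearMap.mul' k k) ∘ₗ
        (TensorProduct.map σ (Coalgebra.counit (R := k) (A := K))) ∘ₗ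
        (TensorProduct.assoc k K K K).symm.toLinearMap)
      (σ ∘ₗ (LinearMap.rTensor K (LinearMap.mul' k K)) ∘ₗ
        (TensorProduct.assoc k K K K).symm.toLinearMap)
    = convS k
      ((LinearMap.mul' k k) ∘ₗ
        (TensorProduct.map (Coalgebra.counit (R := k) (A := K)) σ))
      (σ ∘ₗ (LinearMap.lTensor K (LinearMap.mul' k K))) ∧
  (∀ h : K, σ (h ⊗ₜ[k] 1) = Coalgebra.counit (R := k) h) ∧
  (∀ h : K, σ ((1 : K) ⊗ₜ[k] h) = Coalgebra.counit (R := k) h) ∧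
  convS k σ σ' = Coalgebra.counit (R := k) (A := K ⊗[k] K) ∧
  convS k σ' σ = Coalgebra.counit (R := k) (A := K ⊗[k] K)

/-- The `σ`-twisted product `a ·_σ a' = σ(a₍₋₁₎ ⊗ a'₍₋₁₎) a₍₀₎a'₍₀₎` attached to a left
`K`-coaction `ρ : A → K ⊗ A`, as a linear map `A ⊗ A → A`. -/
noncomputable def leftTwistedMul {K A : Type u} [Ring K] [Ring A] [Bialgebra k K]
    [Algebra k A] (ρ : A →ₗ[k] K ⊗[k] A) (σ : K ⊗[k] K →ₗ[k] k) : A ⊗[k] A →ₗ[k] A :=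
  (TensorProduct.lid k A).toLinearMap ∘ₗ
    (TensorProduct.map σ (LinearMap.mul' k A)) ∘ₗ
    (TensorProduct.tensorTensorTensorComm k K A K A).toLinearMap ∘ₗ
    (TensorProduct.map ρ ρ)

/-- A linear map `j : H → A` is a right `H`-comodule map: `δ ∘ j = (j ⊗ id) ∘ Δ`. -/
def IsComodMap {H A : Type u} [Ring H] [Ring A] [Bialgebra k H] [Algebra k A]
    (c : ComodAlg k H A) (j : H →ₗ[k] A) : Prop :=
  c.δ.toLinearMap ∘ₗ j
    = (TensorProduct.map j LinearMap.id) ∘ₗ (Coalgebra.comul (R := k) (A := H))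

/-- Cleftness of `A^{co H} ⊆ A` relative to a (possibly twisted) product `m : A ⊗ A → A`. -/
noncomputable def IsCleftWith {H A : Type u} [Ring H] [Ring A] [Bialgebra k H] [Algebra k A]
    (c : ComodAlg k H A) (m : A ⊗[k] A →ₗ[k] A) : Prop :=
  ∃ j : H →ₗ[k] A, IsComodMap k c j ∧
    ∃ g : H →ₗ[k] A,
      m ∘ₗ (TensorProduct.map j g) ∘ₗ (Coalgebra.comul (R := k) (A := H))
        = (Algebra.linearMap k A) ∘ₗ (Coalgebra.counit (R := k) (A := H)) ∧
      m ∘ₗ (TensorProduct.map g j) ∘ₗ (Coalgebra.comul (R := k) (A := H))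
        = (Algebra.linearMap k A) ∘ₗ (Coalgebra.counit (R := k) (A := H))

/-- A sheaf of right `H`-comodule algebras on the topological space `M`. -/
structure SheafCA (H : Type u) [Ring H] [Bialgebra k H]
    (M : Type u) [TopologicalSpace M] where
  obj : Opens M → Type u
  [objRing : ∀ U, Ring (obj U)]
  [objAlg : ∀ U, Algebra k (obj U)]
  comod : ∀ U, ComodAlg k H (obj U)
  res : ∀ {U V : Opens M}, V ≤ U → obj U →ₐ[k] obj V
  res_id : ∀ (U : Opens M) (x : obj U), res (le_refl U) x = x
  res_comp : ∀ {U V W : Opens M} (hVU : V ≤ U) (hWV : W ≤ V) (x : obj U),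
      res hWV (res hVU x) = res (hWV.trans hVU) x
  res_comod : ∀ {U V : Opens M} (h : V ≤ U) (x : obj U),
      (comod V).δ (res h x)
        = TensorProduct.map (res h).toLinearMap LinearMap.id ((comod U).δ x)
  locality : ∀ {U : Opens M} (𝒱 : Set (Opens M))
      (h𝒱 : ∀ V ∈ 𝒱, V ≤ U), U ≤ sSup 𝒱 → ∀ s t : obj U,
      (∀ V (hV : V ∈ 𝒱), res (h𝒱 V hV) s = res (h𝒱 V hV) t) → s = t
  gluing : ∀ {U : Opens M} (𝒱 : Set (Opens M))
      (h𝒱 : ∀ V ∈ 𝒱, V ≤ U), U ≤ sSup 𝒱 →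
      ∀ sec : ∀ V ∈ 𝒱, obj V,
      (∀ V (hV : V ∈ 𝒱) (W) (hW : W ∈ 𝒱),
        res (inf_le_left : V ⊓ W ≤ V) (sec V hV)
          = res (inf_le_right : V ⊓ W ≤ W) (sec W hW)) →
      ∃ s : obj U, ∀ V (hV : V ∈ 𝒱), res (h𝒱 V hV) s = sec V hV

attribute [instance] SheafCA.objRing SheafCA.objAlg

/-- `F` is a quantum principal bundle over the ringed space `(M, O_M)` (`O_M` given as a
subset of each value of `F`), relative to the choice `m` of product on each value of `F`. -/
noncomputable def IsQPBWith {H M : Type u} [Ring H] [Bialgebra k H] [TopologicalSpace M]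
    (F : SheafCA k H M) (OM : ∀ U : Opens M, Set (F.obj U))
    (m : ∀ U : Opens M, F.obj U ⊗[k] F.obj U →ₗ[k] F.obj U) : Prop :=
  ∃ 𝒰 : Set (Opens M), sSup 𝒰 = ⊤ ∧
    ∀ V ∈ 𝒰, ((ComodAlg.coinv (F.comod V) : Set (F.obj V)) = OM V) ∧
      IsCleftWith k (F.comod V) (m V)

end QPB

open QPB

namespace QPB

section Convolution

open WithConv

variable {k : Type*} [CommRing k]
variable {C : Type*} [AddCommGroup C] [Module k C]
variable {B B' : Type*} [Ring B] [Algebra k B] [Ring B'] [Algebra k B']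
variable {P Q R S : Type*} [AddCommGroup P] [Module k P] [AddCommGroup Q] [Module k Q]
  [AddCommGroup R] [Module k R] [AddCommGroup S] [Module k S]

/-- Post-composition with a linear map, between convolution algebras. -/
def post (L : P →ₗ[k] Q) (f : WithConv (C →ₗ[k] P)) : WithConv (C →ₗ[k] Q) :=
  toConv (L ∘ₗ f.ofConv)

lemma post_post (L : Q →ₗ[k] R) (L' : P →ₗ[k] Q) (f : WithConv (C →ₗ[k] P)) :
    post L (post L' f) = post (L ∘ₗ L') f := rfl

lemma post_id (f : WithConv (C →ₗ[k] P)) : post LinearMap.id f = f := rfl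

variable [Coalgebra k C]

lemma post_mul (h : B →ₐ[k] B') (f g : WithConv (C →ₗ[k] B)) :
    post h.toLinearMap (f * g) = post h.toLinearMap f * post h.toLinearMap g :=
  congrArg toConv (LinearMap.algHom_comp_convMul_distrib h f g)

lemma post_one (h : B →ₐ[k] B') : post h.toLinearMap (1 : WithConv (C →ₗ[k] B)) = 1 := by
  ext c
  simp [post, LinearMap.convOne_def]

/-- The convolution product of two composites factors through the tensor product. -/
lemma post_mul_post (l : P →ₗ[k] B) (r : Q →ₗ[k] B)
    (f : WithConv (C →ₗ[k] P)) (g : WithConv (C →ₗ[k] Q)) :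
    post l f * post r g = post (LinearMap.mul' k B ∘ₗ TensorProduct.map l r)
      (toConv (TensorProduct.map f.ofConv g.ofConv ∘ₗ Coalgebra.comul)) := by
  ext c
  simp [post, LinearMap.convMul_def, TensorProduct.map_comp]

/-- Two linear expressions in a binary convolution product agree if they do so on factors. -/
lemma post_mul_congr (L : B →ₗ[k] R) (L' : B' →ₗ[k] R)
    (l : P →ₗ[k] B) (r : Q →ₗ[k] B) (l' : P →ₗ[k] B') (r' : Q →ₗ[k] B')
    (h : ∀ p q, L (l p * r q) = L' (l' p * r' q))
    (f : WithConv (C →ₗ[k] P)) (g : WithConv (C →ₗ[k] Q)) :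
    post L (post l f * post r g) = post L' (post l' f * post r' g) := by
  rw [post_mul_post, post_mul_post l', post_post, post_post]
  congr 1
  exact TensorProduct.ext' fun p q => by simpa using h p q

/-- Two linear expressions in a ternary convolution product agree if they do so on factors. -/
lemma post_mul_mul_congr (L : B →ₗ[k] S) (L' : B' →ₗ[k] S)
    (l : P →ₗ[k] B) (m : Q →ₗ[k] B) (r : R →ₗ[k] B)
    (l' : P →ₗ[k] B') (m' : Q →ₗ[k] B') (r' : R →ₗ[k] B')
    (h : ∀ p q t, L (l p * m q * r t) = L' (l' p * m' q * r' t))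
    (f : WithConv (C →ₗ[k] P)) (g : WithConv (C →ₗ[k] Q)) (e : WithConv (C →ₗ[k] R)) :
    post L (post l f * post m g * post r e) = post L' (post l' f * post m' g * post r' e) := by
  have key : ∀ (x : P ⊗[k] Q) t,
      L ((LinearMap.mul' k B ∘ₗ TensorProduct.map l m) x * r t) =
        L' ((LinearMap.mul' k B' ∘ₗ TensorProduct.map l' m') x * r' t) := by
    intro x t
    induction x with
    | zero => simp
    | tmul p q => simpa using h p q t
    | add x y hx hy => simp only [map_add, add_mul, hx, hy]
  rw [post_mul_post, post_mul_post l' m']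
  exact post_mul_congr _ _ _ _ _ _ key _ e

/-- Two linear expressions in a quaternary convolution product agree if they do so on factors. -/
lemma post_mul_mul_mul_congr {T : Type*} [AddCommGroup T] [Module k T]
    (L : B →ₗ[k] T) (L' : B' →ₗ[k] T)
    (l : P →ₗ[k] B) (m : Q →ₗ[k] B) (r : R →ₗ[k] B) (s : S →ₗ[k] B)
    (l' : P →ₗ[k] B') (m' : Q →ₗ[k] B') (r' : R →ₗ[k] B') (s' : S →ₗ[k] B')
    (h : ∀ p q t u, L (l p * m q * r t * s u) = L' (l' p * m' q * r' t * s' u))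
    (f : WithConv (C →ₗ[k] P)) (g : WithConv (C →ₗ[k] Q)) (e : WithConv (C →ₗ[k] R))
    (d : WithConv (C →ₗ[k] S)) :
    post L (post l f * post m g * post r e * post s d) =
      post L' (post l' f * post m' g * post r' e * post s' d) := by
  have key : ∀ (x : P ⊗[k] Q) t u,
      L ((LinearMap.mul' k B ∘ₗ TensorProduct.map l m) x * r t * s u) =
        L' ((LinearMap.mul' k B' ∘ₗ TensorProduct.map l' m') x * r' t * s' u) := by
    intro x t u
    induction x with
    | zero => simp
    | tmul p q => simpa using h p q t u
    | add x y hx hy => simp only [map_add, add_mul, hx, hy]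
  rw [post_mul_post, post_mul_post l' m']
  exact post_mul_mul_congr _ _ _ _ _ _ _ _ key _ e d

lemma mul_post_mul_post_mul (h : B →ₐ[k] B') (f g : WithConv (C →ₗ[k] B))
    (x y : WithConv (C →ₗ[k] B')) :
    x * post h.toLinearMap f * (post h.toLinearMap g * y) =
      x * post h.toLinearMap (f * g) * y := by
  rw [post_mul]
  simp only [mul_assoc]

end Convolution

section Hopf

open WithConv Coalgebra

variable {k : Type*} [CommRing k]

/-- The left inclusion `a ↦ a ⊗ 1`. -/
noncomputable abbrev inl (A B : Type*) [Ring A] [Ring B] [Algebra k A] [Algebra k B] :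
    A →ₐ[k] A ⊗[k] B := Algebra.TensorProduct.includeLeft

/-- The right inclusion `b ↦ 1 ⊗ b`. -/
noncomputable abbrev inr (A B : Type*) [Ring A] [Ring B] [Algebra k A] [Algebra k B] :
    B →ₐ[k] A ⊗[k] B := Algebra.TensorProduct.includeRight

variable {K : Type*} [Ring K] [HopfAlgebra k K]

variable (k K) in
/-- The identity of `K` in the convolution algebra. -/
def convId : WithConv (K →ₗ[k] K) := toConv LinearMap.id

variable (k K) in
/-- The antipode of `K` in the convolution algebra. -/
def convAntipode : WithConv (K →ₗ[k] K) := toConv (HopfAlgebra.antipode k)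

lemma convAntipode_mul_convId : convAntipode k K * convId k K = 1 := LinearMap.antipode_mul_id

lemma convId_mul_convAntipode : convId k K * convAntipode k K = 1 := LinearMap.id_mul_antipode

lemma post_counit_convId : post counit (convId k K) = 1 := by
  ext; simp [post, convId]

lemma post_counit_convAntipode : post counit (convAntipode k K) = 1 := by
  ext; simp [post, convAntipode]

lemma post_comul_convId :
    post comul (convId k K) =
      post (inl (k := k) K K).toLinearMap (convId k K) *
        post (inr (k := k) K K).toLinearMap (convId k K) := by
  rw [post_mul_post]
  have : LinearMap.mul' k (K ⊗[k] K) ∘ₗ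
      TensorProduct.map (inl (k := k) K K).toLinearMap (inr (k := k) K K).toLinearMap =
      LinearMap.id := TensorProduct.ext' fun p q => by simp
  rw [this]
  ext c
  simp [post, convId]

/-- The antipode is anti-comultiplicative. -/
lemma post_comul_convAntipode :
    post comul (convAntipode k K) =
      post (inr (k := k) K K).toLinearMap (convAntipode k K) *
        post (inl (k := k) K K).toLinearMap (convAntipode k K) := by
  have hΔ : (comul : K →ₗ[k] K ⊗[k] K) = (Bialgebra.comulAlgHom k K).toLinearMap := rfl
  refine left_inv_eq_right_inv (a := post comul (convId k K)) ?_ ?_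
  · rw [hΔ, ← post_mul, convAntipode_mul_convId, post_one]
  · rw [post_comul_convId]
    rw [mul_assoc, ← mul_assoc (post (inr (k := k) K K).toLinearMap (convId k K)), ← post_mul,
      convId_mul_convAntipode, post_one, one_mul, ← post_mul, convId_mul_convAntipode, post_one]

variable {D : Type*} [Ring D] [Bialgebra k D]

/-- An algebra homomorphism between bialgebras is comultiplicative. -/
def PreservesComul {A : Type*} [Ring A] [Bialgebra k A] (i : A →ₐ[k] D) : Prop :=
  comul ∘ₗ i.toLinearMap = TensorProduct.map i.toLinearMap i.toLinearMap ∘ₗ comul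

lemma post_comul_post_convId (i : K →ₐ[k] D)
    (hi : PreservesComul i) :
    post comul (post i.toLinearMap (convId k K)) =
      post (inl D D).toLinearMap (post i.toLinearMap (convId k K)) *
        post (inr D D).toLinearMap (post i.toLinearMap (convId k K)) := by
  have hm : TensorProduct.map i.toLinearMap i.toLinearMap =
    (Algebra.TensorProduct.map i i).toLinearMap := rfl
  rw [post_post, hi, ← post_post, post_comul_convId, hm, post_mul]
  simp only [post_post, ← AlgHom.comp_toLinearMap, Algebra.TensorProduct.map_comp_includeLeft,
    Algebra.TensorProduct.map_comp_includeRight]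

lemma post_comul_post_convAntipode (i : K →ₐ[k] D)
    (hi : PreservesComul i) :
    post comul (post i.toLinearMap (convAntipode k K)) =
      post (inr D D).toLinearMap (post i.toLinearMap (convAntipode k K)) *
        post (inl D D).toLinearMap (post i.toLinearMap (convAntipode k K)) := by
  have hm : TensorProduct.map i.toLinearMap i.toLinearMap =
    (Algebra.TensorProduct.map i i).toLinearMap := rfl
  rw [post_post, hi, ← post_post, post_comul_convAntipode, hm, post_mul]
  simp only [post_post, ← AlgHom.comp_toLinearMap, Algebra.TensorProduct.map_comp_includeLeft,
    Algebra.TensorProduct.map_comp_includeRight]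

lemma post_comul_mul {C : Type*} [AddCommGroup C] [Module k C] [Coalgebra k C]
    (f g : WithConv (C →ₗ[k] D)) :
    post comul (f * g) = post comul f * post comul g :=
  post_mul (Bialgebra.comulAlgHom k D) f g

lemma post_counit_mul {C : Type*} [AddCommGroup C] [Module k C] [Coalgebra k C]
    (f g : WithConv (C →ₗ[k] D)) :
    post counit (f * g) = post counit f * post counit g :=
  post_mul (Bialgebra.counitAlgHom k D) f g

/-- `Δ(i₁(a₍₁₎) i₂(S(a₍₂₎)) i₃(a₍₃₎))`, its factors ordered by the index in `a`. -/
lemma post_comul_id_mul_antipode_mul_id (i₁ i₂ i₃ : K →ₐ[k] D)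
    (h₁ : PreservesComul i₁)
    (h₂ : PreservesComul i₂)
    (h₃ : PreservesComul i₃) :
    post comul (post i₁.toLinearMap (convId k K) * post i₂.toLinearMap (convAntipode k K) *
        post i₃.toLinearMap (convId k K)) =
      post (inl D D).toLinearMap (post i₁.toLinearMap (convId k K)) *
        post (inr D D).toLinearMap
          (post i₁.toLinearMap (convId k K) * post i₂.toLinearMap (convAntipode k K)) *
        post (inl D D).toLinearMap
          (post i₂.toLinearMap (convAntipode k K) * post i₃.toLinearMap (convId k K)) *
        post (inr D D).toLinearMap (post i₃.toLinearMap (convId k K)) := by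
  rw [post_comul_mul, post_comul_mul, post_comul_post_convId i₁ h₁,
    post_comul_post_convAntipode i₂ h₂, post_comul_post_convId i₃ h₃, mul_post_mul_post_mul,
    mul_post_mul_post_mul]

lemma comul_comp_inl (A B : Type*) [Ring A] [Ring B] [Bialgebra k A] [Bialgebra k B] :
    PreservesComul (inl (k := k) A B) := by
  ext a
  simp only [LinearMap.comp_apply, AlgHom.toLinearMap_apply,
    Algebra.TensorProduct.includeLeft_apply, TensorProduct.comul_tmul, Bialgebra.comul_one]
  generalize comul (R := k) a = x
  induction x with
  | zero => simp
  | tmul p q => simp [Algebra.TensorProduct.one_def]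
  | add x y hx hy => simp only [map_add, TensorProduct.add_tmul, hx, hy]

lemma comul_comp_inr (A B : Type*) [Ring A] [Ring B] [Bialgebra k A] [Bialgebra k B] :
    PreservesComul (inr (k := k) A B) := by
  ext a
  simp only [LinearMap.comp_apply, AlgHom.toLinearMap_apply,
    Algebra.TensorProduct.includeRight_apply, TensorProduct.comul_tmul, Bialgebra.comul_one]
  generalize comul (R := k) a = x
  induction x with
  | zero => simp
  | tmul p q => simp [Algebra.TensorProduct.one_def]
  | add x y hx hy => simp only [map_add, TensorProduct.tmul_add, hx, hy]

/-- Compatibility with comultiplication is stable under composition. -/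
lemma comul_comp_comp {A B E : Type*} [Ring A] [Ring B] [Ring E] [Bialgebra k A] [Bialgebra k B]
    [Bialgebra k E] (i : B →ₐ[k] E) (i' : A →ₐ[k] B)
    (hi : PreservesComul i)
    (hi' : PreservesComul i') :
    PreservesComul (i.comp i') := by
  unfold PreservesComul at *
  rw [AlgHom.comp_toLinearMap, ← LinearMap.comp_assoc, hi, LinearMap.comp_assoc, hi',
    ← LinearMap.comp_assoc, TensorProduct.map_comp]

end Hopf

section Cocycle

open WithConv Coalgebra

variable {k : Type*} [CommRing k] {K : Type*} [Ring K] [HopfAlgebra k K]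

/-- The functional `f ⊗ g` on a tensor product. -/
noncomputable abbrev pair {P Q : Type*} [AddCommGroup P] [AddCommGroup Q] [Module k P] [Module k Q]
    (f : P →ₗ[k] k) (g : Q →ₗ[k] k) : P ⊗[k] Q →ₗ[k] k :=
  LinearMap.mul' k k ∘ₗ TensorProduct.map f g

lemma post_conv_mul {C D : Type*} [AddCommGroup C] [Module k C] [AddCommGroup D] [Module k D]
    [Coalgebra k D] (f g : WithConv (D →ₗ[k] k)) (T : WithConv (C →ₗ[k] D)) :
    post (f * g).ofConv T = post (pair f.ofConv g.ofConv) (post comul T) := rfl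

variable (k K) in
/-- The map `a ↦ a₍₁₎ ⊗ S(a₍₂₎)`. -/
noncomputable def idAntipode : WithConv (K →ₗ[k] K ⊗[k] K) :=
  post (inl K K).toLinearMap (convId k K) * post (inr K K).toLinearMap (convAntipode k K)

variable (k K) in
/-- The map `a ↦ S(a₍₁₎) ⊗ a₍₂₎`. -/
noncomputable def antipodeId : WithConv (K →ₗ[k] K ⊗[k] K) :=
  post (inl K K).toLinearMap (convAntipode k K) * post (inr K K).toLinearMap (convId k K)

lemma post_counit_antipodeId : post counit (antipodeId k K) = 1 := by
  have h1 : counit ∘ₗ (inl (k := k) K K).toLinearMap = counit := by ext; simp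
  have h2 : counit ∘ₗ (inr (k := k) K K).toLinearMap = counit := by ext; simp
  rw [antipodeId, post_counit_mul, post_post, post_post, h1, h2, post_counit_convId,
    post_counit_convAntipode, one_mul]

/-- `σ(S(a₍₁₎) ⊗ a₍₄₎) σ'(S(a₍₂₎) ⊗ a₍₃₎) = ε(a)` whenever `σ' * σ = ε`. -/
lemma post_antipode_mul_mul_id (σ σ' : K ⊗[k] K →ₗ[k] k)
    (h : toConv σ' * toConv σ = 1) :
    post σ (post (inl K K).toLinearMap (convAntipode k K) *
      post (Algebra.linearMap k (K ⊗[k] K)) (post σ' (antipodeId k K)) *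
      post (inr K K).toLinearMap (convId k K)) = 1 := by
  have e : post (toConv σ' * toConv σ).ofConv (antipodeId k K) = 1 := by
    rw [h]; exact post_counit_antipodeId
  rw [post_conv_mul, antipodeId, post_comul_mul,
    post_comul_post_convAntipode _ (comul_comp_inl K K),
    post_comul_post_convId _ (comul_comp_inr K K)] at e
  rw [mul_post_mul_post_mul, ← antipodeId, post_post, post_post] at e
  rw [← e, post_post]
  refine (post_mul_mul_congr _ _ _ _ _ _ _ _ ?_ _ _ _).symm
  intro p q t
  simp [mul_comm, Algebra.algebraMap_eq_smul_one]

lemma post_mul'_idAntipode : post (LinearMap.mul' k K) (idAntipode k K) = 1 := by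
  rw [← convId_mul_convAntipode, idAntipode]
  exact post_mul_congr (LinearMap.mul' k K) (LinearMap.id : K →ₗ[k] K) (inl K K).toLinearMap
    (inr K K).toLinearMap LinearMap.id LinearMap.id (fun p q => by simp) _ _

lemma post_mul'_antipodeId : post (LinearMap.mul' k K) (antipodeId k K) = 1 := by
  rw [← convAntipode_mul_convId, antipodeId]
  exact post_mul_congr (LinearMap.mul' k K) (LinearMap.id : K →ₗ[k] K) (inl K K).toLinearMap
    (inr K K).toLinearMap LinearMap.id LinearMap.id (fun p q => by simp) _ _

section Triple

variable {D : Type*} [Ring D] [Bialgebra k D] (i₁₂ i₂₃ : K ⊗[k] K →ₐ[k] D)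

/-- The map `a ↦ i₁(a₍₁₎) i₂(S(a₍₂₎)) i₃(a₍₃₎)`, where `i₁ ⊗ i₂ = i₁₂` and `i₂ ⊗ i₃ = i₂₃`. -/
noncomputable def idAntipodeId : WithConv (K →ₗ[k] D) :=
  post (i₁₂.comp (inl K K)).toLinearMap (convId k K) * post i₂₃.toLinearMap (antipodeId k K)

/-- `Δ(i₁(a₍₁₎) i₂(S(a₍₂₎)) i₃(a₍₃₎))`, its factors ordered by the index in `a`. -/
lemma post_comul_idAntipodeId (hi : i₁₂.comp (inr K K) = i₂₃.comp (inl K K))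
    (h₁ : PreservesComul (i₁₂.comp (inl K K))) (h₂ : PreservesComul (i₂₃.comp (inl K K)))
    (h₃ : PreservesComul (i₂₃.comp (inr K K))) :
    post comul (idAntipodeId i₁₂ i₂₃) =
      post (inl D D).toLinearMap (post (i₁₂.comp (inl K K)).toLinearMap (convId k K)) *
        post (inr D D).toLinearMap (post i₁₂.toLinearMap (idAntipode k K)) *
        post (inl D D).toLinearMap (post i₂₃.toLinearMap (antipodeId k K)) *
        post (inr D D).toLinearMap (post (i₂₃.comp (inr K K)).toLinearMap (convId k K)) := by
  have e₁₂ : post i₁₂.toLinearMap (idAntipode k K) =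
      post (i₁₂.comp (inl K K)).toLinearMap (convId k K) *
        post (i₁₂.comp (inr K K)).toLinearMap (convAntipode k K) := by
    rw [idAntipode, post_mul]; rfl
  have e₂₃ : post i₂₃.toLinearMap (antipodeId k K) =
      post (i₁₂.comp (inr K K)).toLinearMap (convAntipode k K) *
        post (i₂₃.comp (inr K K)).toLinearMap (convId k K) := by
    rw [antipodeId, post_mul, hi]; rfl
  rw [idAntipodeId, e₁₂, e₂₃, ← mul_assoc]
  exact post_comul_id_mul_antipode_mul_id _ _ _ h₁ (hi ▸ h₂) h₃

variable {i₁₂ i₂₃}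

/-- `σ(a₍₁₎ ⊗ S(a₍₂₎)a₍₃₎) = ε(a)`. -/
lemma post_mul_right_idAntipodeId {σ : K ⊗[k] K →ₗ[k] k}
    (hσ : ∀ a : K, σ (a ⊗ₜ[k] 1) = counit (R := k) a) {g : D →ₗ[k] k}
    (hg : ∀ p q, g (i₁₂ (inl K K p) * i₂₃ q) = σ (p ⊗ₜ LinearMap.mul' k K q)) :
    post g (idAntipodeId i₁₂ i₂₃) = 1 := by
  have h : post g (idAntipodeId i₁₂ i₂₃) =
      post σ (post (inl K K).toLinearMap (convId k K) *
        post ((inr K K).toLinearMap ∘ₗ LinearMap.mul' k K) (antipodeId k K)) := by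
    refine post_mul_congr _ _ _ _ _ _ ?_ _ _
    intro p q
    simpa using hg p q
  rw [h, ← post_post, post_mul'_antipodeId, post_one, mul_one, post_post, ← post_counit_convId]
  congr 1
  ext a
  simp [hσ]

/-- Convolving with `σ(ab ⊗ c)` does not change the value at `a₍₁₎ ⊗ S(a₍₂₎) ⊗ a₍₃₎`. -/
lemma post_mul_mul_left_idAntipodeId (hi : i₁₂.comp (inr K K) = i₂₃.comp (inl K K))
    (h₁ : PreservesComul (i₁₂.comp (inl K K))) (h₂ : PreservesComul (i₂₃.comp (inl K K)))
    (h₃ : PreservesComul (i₂₃.comp (inr K K)))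
    {σ : K ⊗[k] K →ₗ[k] k} (hσ : ∀ a : K, σ (1 ⊗ₜ[k] a) = counit (R := k) a)
    (f : WithConv (D →ₗ[k] k)) {g : D →ₗ[k] k}
    (hg : ∀ q s, g (i₁₂ q * i₂₃ (inr K K s)) = σ (LinearMap.mul' k K q ⊗ₜ s)) :
    post (f * toConv g).ofConv (idAntipodeId i₁₂ i₂₃) =
      post f.ofConv (idAntipodeId i₁₂ i₂₃) := by
  have h : post (pair f.ofConv g) (post comul (idAntipodeId i₁₂ i₂₃)) =
      post (pair f.ofConv (LinearMap.id : k →ₗ[k] k) ∘ₗ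
          TensorProduct.map LinearMap.id σ) (
        post (((inl (k := k) D (K ⊗[k] K)).comp (i₁₂.comp (inl K K))).toLinearMap)
          (convId k K) *
        post (((inr (k := k) D (K ⊗[k] K)).comp (inl K K)).toLinearMap ∘ₗ
          LinearMap.mul' k K) (idAntipode k K) *
        post ((inl (k := k) D (K ⊗[k] K)).comp i₂₃).toLinearMap (antipodeId k K) *
        post ((inr (k := k) D (K ⊗[k] K)).comp (inr K K)).toLinearMap (convId k K)) := by
    rw [post_comul_idAntipodeId i₁₂ i₂₃ hi h₁ h₂ h₃]
    simp only [post_post]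
    refine post_mul_mul_mul_congr _ _ _ _ _ _ _ _ _ _ ?_ _ _ _ _
    intro p q r s
    simpa using congrArg (f.ofConv (i₁₂ (inl K K p) * i₂₃ r) * ·) (hg q s)
  have h' : post (pair f.ofConv (LinearMap.id : k →ₗ[k] k) ∘ₗ
          TensorProduct.map LinearMap.id σ) (
        post (inl (k := k) D (K ⊗[k] K)).toLinearMap (idAntipodeId i₁₂ i₂₃) *
        post ((inr (k := k) D (K ⊗[k] K)).comp (inr K K)).toLinearMap (convId k K)) =
      post LinearMap.id (post f.ofConv (idAntipodeId i₁₂ i₂₃) * post counit (convId k K)) := by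
    refine post_mul_congr _ (LinearMap.id : k →ₗ[k] k) _ _ f.ofConv counit ?_ _ _
    intro p q
    simp [hσ]
  have e : post ((inl (k := k) D (K ⊗[k] K)).comp (i₁₂.comp (inl K K))).toLinearMap (convId k K) *
      post ((inl (k := k) D (K ⊗[k] K)).comp i₂₃).toLinearMap (antipodeId k K) =
      post (inl (k := k) D (K ⊗[k] K)).toLinearMap (idAntipodeId i₁₂ i₂₃) := by
    rw [idAntipodeId, post_mul]; rfl
  rw [post_conv_mul, h, ← post_post (P := K ⊗[k] K) (L' := LinearMap.mul' k K),
    post_mul'_idAntipode, post_one, mul_one, e, h', post_counit_convId, mul_one, post_id]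

/-- `σ'(b₍₁₎ ⊗ c₍₁₎) σ(a ⊗ b₍₂₎)` at `a₍₁₎ ⊗ S(a₍₂₎) ⊗ a₍₃₎`. -/
lemma post_mul_idAntipodeId (hi : i₁₂.comp (inr K K) = i₂₃.comp (inl K K))
    (h₁ : PreservesComul (i₁₂.comp (inl K K))) (h₂ : PreservesComul (i₂₃.comp (inl K K)))
    (h₃ : PreservesComul (i₂₃.comp (inr K K)))
    {σ σ' : K ⊗[k] K →ₗ[k] k} {f g : D →ₗ[k] k}
    (hf : ∀ p q, f (i₁₂ (inl K K p) * i₂₃ q) = counit (R := k) p * σ' q)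
    (hg : ∀ q s, g (i₁₂ q * i₂₃ (inr K K s)) = σ q * counit (R := k) s) :
    post (toConv f * toConv g).ofConv (idAntipodeId i₁₂ i₂₃) =
      post σ (idAntipode k K) * post σ' (antipodeId k K) := by
  rw [post_conv_mul, post_comul_idAntipodeId i₁₂ i₂₃ hi h₁ h₂ h₃]
  simp only [post_post]
  refine (post_mul_mul_mul_congr _ (LinearMap.id : k →ₗ[k] k) _ _ _ _
    (counit (R := k) (A := K)) σ σ' (counit (R := k) (A := K)) ?_ _ _ _ _).trans ?_
  · intro p q r s
    have := congrArg₂ (· * ·) (hf p r) (hg q s)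
    simp at this ⊢
    rw [this]; ring
  · rw [post_counit_convId, one_mul, mul_one, post_id]

lemma post_idAntipode_mul_post_antipodeId (hi : i₁₂.comp (inr K K) = i₂₃.comp (inl K K))
    (h₁ : PreservesComul (i₁₂.comp (inl K K))) (h₂ : PreservesComul (i₂₃.comp (inl K K)))
    (h₃ : PreservesComul (i₂₃.comp (inr K K))) {σ σ' : K ⊗[k] K →ₗ[k] k}
    (hr : ∀ a : K, σ (a ⊗ₜ[k] 1) = counit (R := k) a)
    (hl : ∀ a : K, σ (1 ⊗ₜ[k] a) = counit (R := k) a) {f g a b : D →ₗ[k] k}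
    (hf : ∀ p q, f (i₁₂ (inl K K p) * i₂₃ q) = counit (R := k) p * σ' q)
    (hg : ∀ q s, g (i₁₂ q * i₂₃ (inr K K s)) = σ q * counit (R := k) s)
    (ha : ∀ q s, a (i₁₂ q * i₂₃ (inr K K s)) = σ (LinearMap.mul' k K q ⊗ₜ s))
    (hb : ∀ p q, b (i₁₂ (inl K K p) * i₂₃ q) = σ (p ⊗ₜ LinearMap.mul' k K q))
    (h : toConv f * toConv g * toConv a = toConv b) :
    post σ (idAntipode k K) * post σ' (antipodeId k K) = 1 := by
  rw [← post_mul_idAntipodeId hi h₁ h₂ h₃ hf hg,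
    ← post_mul_mul_left_idAntipodeId hi h₁ h₂ h₃ hl _ ha, h]
  exact post_mul_right_idAntipodeId hr hb

end Triple

lemma pair_counit_mul_pair_counit {σ σ' : K ⊗[k] K →ₗ[k] k} (h : toConv σ' * toConv σ = 1) :
    toConv (pair (counit (R := k) (A := K)) σ') * toConv (pair (counit (R := k) (A := K)) σ) =
      1 := by
  have := congrArg (post (Algebra.TensorProduct.lmul' k (S := k)).toLinearMap)
    (TensorProduct.map_convMul_map (f := toConv (counit (R := k) (A := K)))
      (h := toConv (counit (R := k) (A := K))) (g := toConv σ') (k := toConv σ))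
  rw [post_mul, h] at this
  refine Eq.trans this ?_
  have h1 : toConv (counit (R := k) (A := K)) = 1 := rfl
  rw [h1, mul_one]
  ext
  simp [post, LinearMap.convOne_def, mul_comm]

lemma preservesComul_map_comp_inl :
    PreservesComul (k := k) (D := K ⊗[k] (K ⊗[k] K)) (A := K)
      ((Algebra.TensorProduct.map (AlgHom.id k K) (inl K K)).comp (inl K K)) := by
  have h : (Algebra.TensorProduct.map (AlgHom.id k K) (inl K K)).comp (inl K K) =
      inl (k := k) K (K ⊗[k] K) := by
    ext; simp [Algebra.TensorProduct.one_def]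
  rw [h]
  exact comul_comp_inl K (K ⊗[k] K)

lemma map_mul_inr_inr (q : K ⊗[k] K) (s : K) :
    Algebra.TensorProduct.map (AlgHom.id k K) (inl K K) q * inr K (K ⊗[k] K) (inr K K s) =
      TensorProduct.assoc k K K K (q ⊗ₜ s) := by
  induction q with
  | zero => simp
  | tmul x y => simp
  | add x y hx hy => simp only [map_add, add_mul, hx, hy, TensorProduct.add_tmul]

lemma cocycle_solve {σ σ' : K ⊗[k] K →ₗ[k] k} (hinv : toConv σ' * toConv σ = 1)
    {x y z : WithConv (K ⊗[k] (K ⊗[k] K) →ₗ[k] k)}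
    (h : x * y = toConv (pair (counit (R := k) (A := K)) σ) * z) :
    toConv (pair (counit (R := k) (A := K)) σ') * x * y = z := by
  rw [mul_assoc, h, ← mul_assoc, pair_counit_mul_pair_counit hinv, one_mul]

/-- For a 2-cocycle `σ`, the functional `a ↦ σ'(S(a₍₁₎) ⊗ a₍₂₎)` is a right convolution inverse
of `a ↦ σ(a₍₁₎ ⊗ S(a₍₂₎))`. -/
lemma IsTwoCocycle.post_idAntipode_mul_post_antipodeId {k K : Type u} [CommRing k] [Ring K]
    [HopfAlgebra k K] {σ σ' : K ⊗[k] K →ₗ[k] k} (h : IsTwoCocycle k σ σ') :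
    post σ (idAntipode k K) * post σ' (antipodeId k K) = 1 := by
  obtain ⟨hcoc, hr, hl, -, hinv⟩ := h
  have h2 : PreservesComul (k := k) (D := K ⊗[k] (K ⊗[k] K)) (A := K)
      ((inr K (K ⊗[k] K)).comp (inl K K)) :=
    comul_comp_comp _ _ (comul_comp_inr K (K ⊗[k] K)) (comul_comp_inl K K)
  have h3 : PreservesComul (k := k) (D := K ⊗[k] (K ⊗[k] K)) (A := K)
      ((inr K (K ⊗[k] K)).comp (inr K K)) :=
    comul_comp_comp _ _ (comul_comp_inr K (K ⊗[k] K)) (comul_comp_inr K K)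
  have hc := cocycle_solve (congrArg toConv hinv)
    (x := toConv (pair σ (counit (R := k) (A := K)) ∘ₗ
        (TensorProduct.assoc k K K K).symm.toLinearMap))
    (y := toConv (σ ∘ₗ LinearMap.rTensor K (LinearMap.mul' k K) ∘ₗ
      (TensorProduct.assoc k K K K).symm.toLinearMap))
    (z := toConv (σ ∘ₗ LinearMap.lTensor K (LinearMap.mul' k K))) (congrArg toConv hcoc)
  refine QPB.post_idAntipode_mul_post_antipodeId (k := k) (K := K) (D := K ⊗[k] (K ⊗[k] K))
    (i₁₂ := Algebra.TensorProduct.map (AlgHom.id k K) (inl K K)) (i₂₃ := inr K (K ⊗[k] K))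
    (f := pair (counit (R := k) (A := K)) σ')
    (g := pair σ (counit (R := k) (A := K)) ∘ₗ (TensorProduct.assoc k K K K).symm.toLinearMap)
    (a := σ ∘ₗ LinearMap.rTensor K (LinearMap.mul' k K) ∘ₗ
      (TensorProduct.assoc k K K K).symm.toLinearMap)
    (b := σ ∘ₗ LinearMap.lTensor K (LinearMap.mul' k K))
    ?_ ?_ ?_ ?_ hr hl ?_ ?_ ?_ ?_ ?_
  · ext; simp
  · exact preservesComul_map_comp_inl
  · exact h2
  · exact h3
  · intro p q; simp [← Algebra.TensorProduct.one_def]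
  · intro q s; rw [map_mul_inr_inr]; simp
  · intro q s; rw [map_mul_inr_inr]; simp
  · intro p q; simp [← Algebra.TensorProduct.one_def]
  · exact hc

end Cocycle

section Pullback

open WithConv Coalgebra

variable {k : Type*} [CommRing k] {K H : Type*} [Ring K] [Bialgebra k K] [Ring H] [Bialgebra k H]

/-- The coalgebra map `h ↦ h₍₋₁₎ ε(h₍₀₎)` attached to a left coaction `ρH : H → K ⊗ H`. -/
noncomputable def coactionMap (ρH : H →ₗ[k] K ⊗[k] H) : H →ₗ[k] K :=
  (TensorProduct.rid k K).toLinearMap ∘ₗ TensorProduct.map LinearMap.id counit ∘ₗ ρH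

/-- A left coaction on `H` commuting with `Δ` is determined by its `coactionMap`. -/
lemma eq_map_coactionMap_comp_comul {ρH : H →ₗ[k] K ⊗[k] H}
    (hb : TensorProduct.map LinearMap.id (comul (R := k) (A := H)) ∘ₗ ρH =
      (TensorProduct.assoc k K H H).toLinearMap ∘ₗ TensorProduct.map ρH LinearMap.id ∘ₗ comul) :
    ρH = TensorProduct.map (coactionMap ρH) LinearMap.id ∘ₗ comul := by
  have h := congrArg (fun f => TensorProduct.map (LinearMap.id : K →ₗ[k] K)
    ((TensorProduct.lid k H).toLinearMap ∘ₗ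
      TensorProduct.map (counit (R := k) (A := H)) LinearMap.id) ∘ₗ f) hb
  have e : (TensorProduct.lid k H).toLinearMap ∘ₗ
      TensorProduct.map (counit (R := k) (A := H)) LinearMap.id ∘ₗ comul = LinearMap.id := by
    ext x
    have := Coalgebra.rTensor_counit_comul (R := k) x
    simp only [LinearMap.rTensor] at this
    simp [this]
  rw [← LinearMap.comp_assoc, ← TensorProduct.map_comp, LinearMap.comp_assoc, e,
    LinearMap.id_comp, TensorProduct.map_id, LinearMap.id_comp] at h
  refine h.trans ?_
  rw [← LinearMap.comp_assoc, ← LinearMap.comp_assoc]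
  congr 1
  refine TensorProduct.ext' fun x y => ?_
  simp only [coactionMap, LinearMap.comp_apply, TensorProduct.map_tmul]
  generalize ρH x = z
  induction z with
  | zero => simp
  | tmul a b => simp [TensorProduct.smul_tmul]
  | add x y hx hy => simp only [map_add, TensorProduct.add_tmul, hx, hy]

lemma counit_comp_coactionMap {ρH : H →ₗ[k] K ⊗[k] H}
    (hc : (TensorProduct.lid k H).toLinearMap ∘ₗ
      TensorProduct.map (counit (R := k) (A := K)) LinearMap.id ∘ₗ ρH = LinearMap.id) :
    counit ∘ₗ coactionMap ρH = counit := by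
  refine Eq.trans ?_ (congrArg (fun f => counit (R := k) (A := H) ∘ₗ f) hc)
  simp only [coactionMap, ← LinearMap.comp_assoc]
  congr 1
  exact TensorProduct.ext' fun x y => by simp [mul_comm]

lemma comul_comp_coactionMap {ρH : H →ₗ[k] K ⊗[k] H}
    (ha : TensorProduct.map (comul (R := k) (A := K)) LinearMap.id ∘ₗ ρH =
      (TensorProduct.assoc k K K H).symm.toLinearMap ∘ₗ
        TensorProduct.map LinearMap.id ρH ∘ₗ ρH)
    (hb : TensorProduct.map LinearMap.id (comul (R := k) (A := H)) ∘ₗ ρH =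
      (TensorProduct.assoc k K H H).toLinearMap ∘ₗ TensorProduct.map ρH LinearMap.id ∘ₗ comul) :
    TensorProduct.map (coactionMap ρH) (coactionMap ρH) ∘ₗ comul = comul ∘ₗ coactionMap ρH := by
  have h := congrArg (fun f => (TensorProduct.rid k (K ⊗[k] K)).toLinearMap ∘ₗ
    TensorProduct.map LinearMap.id (counit (R := k) (A := H)) ∘ₗ f) ha
  have l : comul ∘ₗ coactionMap ρH = (TensorProduct.rid k (K ⊗[k] K)).toLinearMap ∘ₗ
      TensorProduct.map LinearMap.id (counit (R := k) (A := H)) ∘ₗ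
      TensorProduct.map (comul (R := k) (A := K)) LinearMap.id ∘ₗ ρH := by
    simp only [coactionMap, ← LinearMap.comp_assoc]
    congr 1
    exact TensorProduct.ext' fun x y => by simp
  have r : (TensorProduct.rid k (K ⊗[k] K)).toLinearMap ∘ₗ
      TensorProduct.map LinearMap.id (counit (R := k) (A := H)) ∘ₗ
      (TensorProduct.assoc k K K H).symm.toLinearMap ∘ₗ TensorProduct.map LinearMap.id ρH =
      TensorProduct.map LinearMap.id (coactionMap ρH) := by
    refine TensorProduct.ext' fun x y => ?_
    simp only [coactionMap, LinearMap.comp_apply, TensorProduct.map_tmul]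
    generalize ρH y = z
    induction z with
    | zero => simp
    | tmul a b => simp
    | add x y hx hy => simp only [map_add, TensorProduct.tmul_add, hx, hy]
  rw [l, h]
  have r' := congrArg (· ∘ₗ ρH) r
  simp only [LinearMap.comp_assoc] at r' ⊢
  rw [r']
  refine ((congrArg (TensorProduct.map LinearMap.id (coactionMap ρH) ∘ₗ ·)
    (eq_map_coactionMap_comp_comul hb)).trans ?_).symm
  simp only [← LinearMap.comp_assoc, ← TensorProduct.map_comp, LinearMap.id_comp,
    LinearMap.comp_id]

/-- The `coactionMap` as a coalgebra homomorphism. -/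
noncomputable def coactionHom (ρH : H →ₗ[k] K ⊗[k] H)
    (hc : (TensorProduct.lid k H).toLinearMap ∘ₗ
      TensorProduct.map (counit (R := k) (A := K)) LinearMap.id ∘ₗ ρH = LinearMap.id)
    (ha : TensorProduct.map (comul (R := k) (A := K)) LinearMap.id ∘ₗ ρH =
      (TensorProduct.assoc k K K H).symm.toLinearMap ∘ₗ
        TensorProduct.map LinearMap.id ρH ∘ₗ ρH)
    (hb : TensorProduct.map LinearMap.id (comul (R := k) (A := H)) ∘ₗ ρH =
      (TensorProduct.assoc k K H H).toLinearMap ∘ₗ TensorProduct.map ρH LinearMap.id ∘ₗ comul) :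
    H →ₗc[k] K where
  __ := coactionMap ρH
  counit_comp := counit_comp_coactionMap hc
  map_comp_comul := comul_comp_coactionMap ha hb

variable {B : Type*} [Ring B] [Algebra k B]

/-- Pre-composition with a coalgebra map, between convolution algebras. -/
def pre {P : Type*} [AddCommGroup P] [Module k P] (φ : H →ₗc[k] K) (f : WithConv (K →ₗ[k] P)) :
    WithConv (H →ₗ[k] P) :=
  toConv (f.ofConv ∘ₗ φ.toLinearMap)

lemma pre_mul (φ : H →ₗc[k] K) (f g : WithConv (K →ₗ[k] B)) :
    pre φ (f * g) = pre φ f * pre φ g :=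
  congrArg toConv (LinearMap.convMul_comp_coalgHom_distrib f g φ)

lemma pre_one (φ : H →ₗc[k] K) : pre φ (1 : WithConv (K →ₗ[k] B)) = 1 := by
  ext x
  simp [pre, LinearMap.convOne_def]

lemma pre_post {P Q : Type*} [AddCommGroup P] [Module k P] [AddCommGroup Q] [Module k Q]
    (φ : H →ₗc[k] K) (L : P →ₗ[k] Q) (f : WithConv (K →ₗ[k] P)) :
    pre φ (post L f) = post L (pre φ f) := rfl

end Pullback

section Twist

open WithConv Coalgebra

variable {k : Type u} [CommRing k] {K H A : Type u} [Ring K] [HopfAlgebra k K]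
  [Ring H] [HopfAlgebra k H] [Ring A] [Algebra k A]

/-- The map `(K ⊗ K) ⊗ A → A` applying `σ` to the first two factors. -/
noncomputable abbrev evalLeft (A : Type u) [Ring A] [Algebra k A] (σ : K ⊗[k] K →ₗ[k] k) :
    (K ⊗[k] K) ⊗[k] A →ₗ[k] A :=
  (TensorProduct.lid k A).toLinearMap ∘ₗ TensorProduct.map σ LinearMap.id

/-- The embedding `a ⊗ x ↦ (a ⊗ 1) ⊗ x`. -/
noncomputable abbrev in13 (k K A : Type u) [CommRing k] [Ring K] [Algebra k K] [Ring A]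
    [Algebra k A] :
    K ⊗[k] A →ₐ[k] (K ⊗[k] K) ⊗[k] A :=
  Algebra.TensorProduct.map (inl K K) (AlgHom.id k A)

/-- The embedding `a ⊗ x ↦ (1 ⊗ a) ⊗ x`. -/
noncomputable abbrev in23 (k K A : Type u) [CommRing k] [Ring K] [Algebra k K] [Ring A]
    [Algebra k A] :
    K ⊗[k] A →ₐ[k] (K ⊗[k] K) ⊗[k] A :=
  Algebra.TensorProduct.map (inr K K) (AlgHom.id k A)

/-- The twisted convolution product as an ordinary one, in `(K ⊗ K) ⊗ A`. -/
lemma leftTwistedMul_comp_map_comp_comul (ρ : A →ₐ[k] K ⊗[k] A) (σ : K ⊗[k] K →ₗ[k] k)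
    (f g : WithConv (H →ₗ[k] A)) :
    leftTwistedMul k ρ.toLinearMap σ ∘ₗ TensorProduct.map f.ofConv g.ofConv ∘ₗ comul =
      (post (evalLeft A σ) (post (in13 k K A).toLinearMap (post ρ.toLinearMap f) *
        post (in23 k K A).toLinearMap (post ρ.toLinearMap g))).ofConv := by
  have h : (TensorProduct.lid k A).toLinearMap ∘ₗ
      (TensorProduct.map σ (LinearMap.mul' k A)) ∘ₗ
      (TensorProduct.tensorTensorTensorComm k K A K A).toLinearMap =
      evalLeft A σ ∘ₗ LinearMap.mul' k _ ∘ₗ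
        TensorProduct.map (in13 k K A).toLinearMap (in23 k K A).toLinearMap := by
    refine TensorProduct.ext_fourfold' fun a x b y => ?_
    simp
  rw [post_mul_post, post_post]
  simp only [post, leftTwistedMul, ofConv_toConv]
  rw [TensorProduct.map_comp]
  have h' := congrArg (fun f' => f' ∘ₗ TensorProduct.map ρ.toLinearMap ρ.toLinearMap ∘ₗ
    TensorProduct.map f.ofConv g.ofConv ∘ₗ comul) h
  simpa only [LinearMap.comp_assoc] using h'

variable {ρ : A →ₐ[k] K ⊗[k] A} {φ : H →ₗc[k] K} {J G : WithConv (H →ₗ[k] A)}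

/-- The coaction on the convolution inverse of a `K`-comodule map. -/
lemma post_coaction_inverse (hJG : J * G = 1) (hGJ : G * J = 1)
    (hJ : post ρ.toLinearMap J =
      post (inl K A).toLinearMap (pre φ (convId k K)) * post (inr K A).toLinearMap J) :
    post ρ.toLinearMap G =
      post (inr K A).toLinearMap G * post (inl K A).toLinearMap (pre φ (convAntipode k K)) := by
  refine left_inv_eq_right_inv (a := post ρ.toLinearMap J) ?_ ?_
  · rw [← post_mul, hGJ, post_one]
  · rw [hJ, mul_post_mul_post_mul, hJG, post_one, mul_one, ← post_mul, ← pre_mul,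
      convId_mul_convAntipode, pre_one, post_one]

/-- The inverse of a cleaving map for the twisted product. -/
noncomputable def twistedInverse (σ' : K ⊗[k] K →ₗ[k] k) (φ : H →ₗc[k] K)
    (G : WithConv (H →ₗ[k] A)) : WithConv (H →ₗ[k] A) :=
  G * post (Algebra.ofId k A).toLinearMap (pre φ (post σ' (antipodeId k K)))

lemma post_twistedInverse {σ' : K ⊗[k] K →ₗ[k] k}
    (hG : post ρ.toLinearMap G =
      post (inr K A).toLinearMap G * post (inl K A).toLinearMap (pre φ (convAntipode k K))) :
    post ρ.toLinearMap (twistedInverse σ' φ G) =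
      post (inr K A).toLinearMap G * post (inl K A).toLinearMap (pre φ (convAntipode k K)) *
        post (Algebra.ofId k (K ⊗[k] A)).toLinearMap (pre φ (post σ' (antipodeId k K))) := by
  rw [twistedInverse, post_mul, hG, post_post, ← AlgHom.comp_toLinearMap]
  congr 3
  exact Subsingleton.elim _ _

lemma mul_mul_mul_mul_eq {S : Type*} [Semigroup S] (a b c d e : S) :
    a * b * c * (d * e) = a * (b * c * d) * e := by
  simp only [mul_assoc]

lemma mul_mul_mul_mul_of_mul_eq_one {S : Type*} [Monoid S] {b c : S} (h : b * c = 1) (a d e : S) :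
    a * b * (c * d * e) = a * d * e := by
  simp only [mul_assoc]
  rw [← mul_assoc b, h, one_mul]

lemma in13_inl : (in13 k K A).comp (inl K A) =
    (inl (K ⊗[k] K) A).comp (inl K K) := Algebra.TensorProduct.map_comp_includeLeft _ _

lemma in23_inl : (in23 k K A).comp (inl K A) =
    (inl (K ⊗[k] K) A).comp (inr K K) := Algebra.TensorProduct.map_comp_includeLeft _ _

lemma in13_inr : (in13 k K A).comp (inr K A) = inr (K ⊗[k] K) A :=
  Algebra.TensorProduct.map_comp_includeRight _ _

lemma in23_inr : (in23 k K A).comp (inr K A) = inr (K ⊗[k] K) A :=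
  Algebra.TensorProduct.map_comp_includeRight _ _

lemma comp_ofId {B B' : Type*} [Ring B] [Algebra k B] [Ring B'] [Algebra k B'] (f : B →ₐ[k] B') :
    f.comp (Algebra.ofId k B) = Algebra.ofId k B' := Subsingleton.elim _ _

lemma twisted_mul_twistedInverse {σ σ' : K ⊗[k] K →ₗ[k] k} (hσ : IsTwoCocycle k σ σ')
    (hJG : J * G = 1)
    (hJ : post ρ.toLinearMap J =
      post (inl K A).toLinearMap (pre φ (convId k K)) * post (inr K A).toLinearMap J)
    (hG : post ρ.toLinearMap G =
      post (inr K A).toLinearMap G * post (inl K A).toLinearMap (pre φ (convAntipode k K))) :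
    post (evalLeft A σ) (post (in13 k K A).toLinearMap (post ρ.toLinearMap J) *
        post (in23 k K A).toLinearMap (post ρ.toLinearMap (twistedInverse σ' φ G))) = 1 := by
  have h : post (in13 k K A).toLinearMap (post ρ.toLinearMap J) *
        post (in23 k K A).toLinearMap (post ρ.toLinearMap (twistedInverse σ' φ G)) =
      post (inl (K ⊗[k] K) A).toLinearMap (pre φ (idAntipode k K)) *
        post (Algebra.ofId k ((K ⊗[k] K) ⊗[k] A)).toLinearMap
          (pre φ (post σ' (antipodeId k K))) := by
    have h1 : post (inr (K ⊗[k] K) A).toLinearMap J * post (inr (K ⊗[k] K) A).toLinearMap G =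
        1 := by
      rw [← post_mul, hJG, post_one]
    rw [post_twistedInverse hG, hJ, idAntipode, pre_mul]
    generalize post σ' (antipodeId k K) = w
    simp only [pre_post, post_mul, post_post, ← AlgHom.comp_toLinearMap, in13_inl, in23_inl,
      in13_inr, in23_inr, comp_ofId]
    exact mul_mul_mul_mul_of_mul_eq_one (S := WithConv (H →ₗ[k] (K ⊗[k] K) ⊗[k] A)) h1 _ _ _
  rw [h]
  have h' : post (evalLeft A σ) (post (inl (K ⊗[k] K) A).toLinearMap (pre φ (idAntipode k K)) *
        post (Algebra.ofId k ((K ⊗[k] K) ⊗[k] A)).toLinearMap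
          (pre φ (post σ' (antipodeId k K)))) =
      post (Algebra.ofId k A).toLinearMap (post σ (pre φ (idAntipode k K)) *
        post LinearMap.id (pre φ (post σ' (antipodeId k K)))) := by
    refine post_mul_congr _ _ _ _ _ _ (fun p q => ?_) _ _
    simp [Algebra.ofId_apply, Algebra.algebraMap_eq_smul_one, mul_comm, mul_smul]
  rw [h', post_id, ← pre_post, ← pre_mul, hσ.post_idAntipode_mul_post_antipodeId, pre_one,
    post_one]

lemma twisted_twistedInverse_mul {σ σ' : K ⊗[k] K →ₗ[k] k} (hσ : IsTwoCocycle k σ σ')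
    (hGJ : G * J = 1)
    (hJ : post ρ.toLinearMap J =
      post (inl K A).toLinearMap (pre φ (convId k K)) * post (inr K A).toLinearMap J)
    (hG : post ρ.toLinearMap G =
      post (inr K A).toLinearMap G * post (inl K A).toLinearMap (pre φ (convAntipode k K))) :
    post (evalLeft A σ)
      (post (in13 k K A).toLinearMap (post ρ.toLinearMap (twistedInverse σ' φ G)) *
        post (in23 k K A).toLinearMap (post ρ.toLinearMap J)) = 1 := by
  have hX := congrArg (pre φ) (post_antipode_mul_mul_id σ σ' (congrArg toConv hσ.2.2.2.2))
  rw [pre_post, pre_one] at hX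
  set X := post (inl K K).toLinearMap (convAntipode k K) *
      post (Algebra.linearMap k (K ⊗[k] K)) (post σ' (antipodeId k K)) *
      post (inr K K).toLinearMap (convId k K) with hXdef
  have h : post (in13 k K A).toLinearMap (post ρ.toLinearMap (twistedInverse σ' φ G)) *
        post (in23 k K A).toLinearMap (post ρ.toLinearMap J) =
      post (inr (K ⊗[k] K) A).toLinearMap G * post (inl (K ⊗[k] K) A).toLinearMap (pre φ X) *
        post (inr (K ⊗[k] K) A).toLinearMap J := by
    have ho : Algebra.linearMap k (K ⊗[k] K) = (Algebra.ofId k (K ⊗[k] K)).toLinearMap := rfl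
    rw [post_twistedInverse hG, hJ, hXdef, pre_mul, pre_mul, ho]
    generalize post σ' (antipodeId k K) = w
    simp only [pre_post, post_mul, post_post, ← AlgHom.comp_toLinearMap, in13_inl, in23_inl,
      in13_inr, in23_inr, comp_ofId]
    exact mul_mul_mul_mul_eq (S := WithConv (H →ₗ[k] (K ⊗[k] K) ⊗[k] A)) _ _ _ _ _
  rw [h]
  have h' : post (evalLeft A σ) (post (inr (K ⊗[k] K) A).toLinearMap G *
        post (inl (K ⊗[k] K) A).toLinearMap (pre φ X) *
        post (inr (K ⊗[k] K) A).toLinearMap J) =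
      post LinearMap.id (post LinearMap.id G *
        post ((Algebra.ofId k A).toLinearMap ∘ₗ σ) (pre φ X) * post LinearMap.id J) := by
    refine post_mul_mul_congr _ _ _ _ _ _ _ _ (fun p q t => ?_) _ _ _
    simp [Algebra.ofId_apply, Algebra.algebraMap_eq_smul_one]
  rw [h', ← post_post, hX, post_one, mul_one, post_id, post_id, post_id, hGJ]

/-- Twisting preserves cleft extensions with a bicomodule cleaving map. -/
lemma isCleftWith_leftTwistedMul (c : ComodAlg k H A) (ρ : A →ₐ[k] K ⊗[k] A)
    (φ : H →ₗc[k] K) {j g : H →ₗ[k] A} (hj : IsComodMap k c j)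
    (hjg : LinearMap.mul' k A ∘ₗ TensorProduct.map j g ∘ₗ comul =
      Algebra.linearMap k A ∘ₗ counit)
    (hgj : LinearMap.mul' k A ∘ₗ TensorProduct.map g j ∘ₗ comul =
      Algebra.linearMap k A ∘ₗ counit)
    (hjK : ρ.toLinearMap ∘ₗ j = TensorProduct.map φ.toLinearMap j ∘ₗ comul)
    {σ σ' : K ⊗[k] K →ₗ[k] k} (hσ : IsTwoCocycle k σ σ') :
    IsCleftWith k c (leftTwistedMul k ρ.toLinearMap σ) := by
  have hJG : toConv j * toConv g = 1 := congrArg toConv hjg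
  have hGJ : toConv g * toConv j = 1 := congrArg toConv hgj
  have hJ : post ρ.toLinearMap (toConv j) =
      post (inl K A).toLinearMap (pre φ (convId k K)) * post (inr K A).toLinearMap (toConv j) := by
    rw [post_mul_post]
    have : LinearMap.mul' k (K ⊗[k] A) ∘ₗ
        TensorProduct.map (inl (k := k) K A).toLinearMap (inr (k := k) K A).toLinearMap =
        LinearMap.id := TensorProduct.ext' fun p q => by simp
    rw [this]
    exact congrArg toConv hjK
  have hG := post_coaction_inverse hJG hGJ hJ
  refine ⟨j, hj, (twistedInverse σ' φ (toConv g)).ofConv, ?_, ?_⟩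
  · refine (leftTwistedMul_comp_map_comp_comul ρ σ (toConv j) _).trans ?_
    rw [twisted_mul_twistedInverse hσ hJG hJ hG]
    rfl
  · refine (leftTwistedMul_comp_map_comp_comul ρ σ _ (toConv j)).trans ?_
    rw [twisted_twistedInverse_mul hσ hGJ hJ hG]
    rfl

end Twist

end QPB

/-- **Statement 19.**  Twisting a sheaf of `(K,H)`-bicomodule algebras, which is an
`H`-quantum principal bundle over `(M, F^{co H})` with `(K,H)`-bicomodule cleaving maps,
by a 2-cocycle `σ` of the external Hopf algebra `K` yields again an `H`-quantum principal
bundle, over `(M, Σ ∘ F^{co H})`. -/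
theorem statement19 (k K H M : Type u) [Field k] [Ring K] [Ring H]
    [HopfAlgebra k K] [HopfAlgebra k H] [TopologicalSpace M]
    (F : SheafCA k H M)
    -- the left `K`-comodule algebra structures on the values of `F` ...
    (ρ : ∀ U : Opens M, F.obj U →ₐ[k] K ⊗[k] F.obj U)
    -- ... are counital and coassociative left coactions ...
    (hρcounit : ∀ U : Opens M,
      (TensorProduct.lid k (F.obj U)).toLinearMap ∘ₗ
          (TensorProduct.map (Coalgebra.counit (R := k) (A := K)) LinearMap.id) ∘ₗ
          (ρ U).toLinearMap
        = LinearMap.id)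
    (hρcoassoc : ∀ U : Opens M,
      (TensorProduct.map (Coalgebra.comul (R := k) (A := K)) LinearMap.id) ∘ₗ
          (ρ U).toLinearMap
        = (TensorProduct.assoc k K K (F.obj U)).symm.toLinearMap ∘ₗ
            (TensorProduct.map LinearMap.id (ρ U).toLinearMap) ∘ₗ (ρ U).toLinearMap)
    -- ... commuting with the right `H`-coactions (bicomodule condition) ...
    (hcomm : ∀ U : Opens M,
      (TensorProduct.assoc k K (F.obj U) H).toLinearMap ∘ₗ
          (TensorProduct.map (ρ U).toLinearMap LinearMap.id) ∘ₗ
          (F.comod U).δ.toLinearMap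
        = (TensorProduct.map LinearMap.id (F.comod U).δ.toLinearMap) ∘ₗ (ρ U).toLinearMap)
    (hρres : ∀ (U V : Opens M) (h : V ≤ U) (x : F.obj U),
      ρ V (F.res h x)
        = TensorProduct.map LinearMap.id (F.res h).toLinearMap (ρ U x))
    -- the compatible left `K`-comodule structure on the `H`-comodule `(H, Δ)`,
    -- making it a `(K,H)`-bicomodule:
    (ρH : H →ₗ[k] K ⊗[k] H)
    (hρHcounit :
      (TensorProduct.lid k H).toLinearMap ∘ₗ
          (TensorProduct.map (Coalgebra.counit (R := k) (A := K)) LinearMap.id) ∘ₗ ρH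
        = LinearMap.id)
    (hρHcoassoc :
      (TensorProduct.map (Coalgebra.comul (R := k) (A := K)) LinearMap.id) ∘ₗ ρH
        = (TensorProduct.assoc k K K H).symm.toLinearMap ∘ₗ
            (TensorProduct.map LinearMap.id ρH) ∘ₗ ρH)
    (hρHbicomod :
      (TensorProduct.map LinearMap.id (Coalgebra.comul (R := k) (A := H))) ∘ₗ ρH
        = (TensorProduct.assoc k K H H).toLinearMap ∘ₗ
            (TensorProduct.map ρH LinearMap.id) ∘ₗ
            (Coalgebra.comul (R := k) (A := H)))
    -- `F` is an `H`-quantum principal bundle over `(M, F^{co H})`, whose cleaving maps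
    -- `j_i`, relative to the cover `{U_i}`, are `(K,H)`-bicomodule maps:
    (𝒰 : Set (Opens M)) (hcover : sSup 𝒰 = ⊤)
    (j : ∀ V ∈ 𝒰, H →ₗ[k] F.obj V)
    (hjcomod : ∀ (V) (hV : V ∈ 𝒰), IsComodMap k (F.comod V) (j V hV))
    (hjconv : ∀ (V) (hV : V ∈ 𝒰), ∃ g : H →ₗ[k] F.obj V,
      (LinearMap.mul' k (F.obj V)) ∘ₗ (TensorProduct.map (j V hV) g) ∘ₗ
          (Coalgebra.comul (R := k) (A := H))
        = (Algebra.linearMap k (F.obj V)) ∘ₗ (Coalgebra.counit (R := k) (A := H)) ∧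
      (LinearMap.mul' k (F.obj V)) ∘ₗ (TensorProduct.map g (j V hV)) ∘ₗ
          (Coalgebra.comul (R := k) (A := H))
        = (Algebra.linearMap k (F.obj V)) ∘ₗ (Coalgebra.counit (R := k) (A := H)))
    (hjK : ∀ (V) (hV : V ∈ 𝒰),
      (ρ V).toLinearMap ∘ₗ (j V hV) = (TensorProduct.map LinearMap.id (j V hV)) ∘ₗ ρH)
    -- `σ` is a 2-cocycle of `K`, with convolution inverse `σ'`:
    (σ σ' : K ⊗[k] K →ₗ[k] k) (hσ : IsTwoCocycle k σ σ') :
    -- then `Σ ∘ F` — same sheaf, same coactions, `σ`-twisted products — is an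
    -- `H`-quantum principal bundle over `(M, Σ ∘ F^{co H})`:
    IsQPBWith k F (fun V => (ComodAlg.coinv (F.comod V) : Set (F.obj V)))
      (fun V => leftTwistedMul k (ρ V).toLinearMap σ) := by
  refine ⟨𝒰, hcover, fun V hV => ⟨rfl, ?_⟩⟩
  obtain ⟨g, hjg, hgj⟩ := hjconv V hV
  refine isCleftWith_leftTwistedMul (F.comod V) (ρ V)
    (coactionHom ρH hρHcounit hρHcoassoc hρHbicomod) (hjcomod V hV) hjg hgj ?_ hσ
  rw [hjK V hV]
  conv_lhs => rw [eq_map_coactionMap_comp_comul hρHbicomod]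
  rw [← LinearMap.comp_assoc, ← TensorProduct.map_comp, LinearMap.id_comp, LinearMap.comp_id]
  rfl
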